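/- (Main dictatorship theorem.) Suppose |A| ≥ 3 and the type domain 𝒰 = ∏_{i=1}^n U_i satisfies: (C1) for each agent i, U_i contains an unrestricted parallel domain, and (C2) for at least n−1 agents, U_i contains a type that is not parallel. Then every social choice mechanism on 𝒰 that is DSIC, deterministic, onto, IR and satisfies no subsidy is a fixed price dictatorship: there exist an agent i* and fixed prices z ∈ ℝ^A such that for every u ∈ 𝒰, x(u) ∈ argmax_{a∈A} u_{i*,a}(z_a) and t_{i*}(u) = z_{x(u)}. -/

import Mathlib

/-!
Common framework: agents indexed by `I`, alternatives `A` (finite, nonempty).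
A type of an agent is a family `u : A → ℝ → ℝ`, where `u a z` is the utility
when alternative `a` is selected and the agent pays `z`.
-/

noncomputable section

namespace NQLSC

/-- A type (utility family) of an agent. -/
abbrev Util (A : Type*) := A → ℝ → ℝ

variable {A I : Type*}

/-- (S1): each `u a` is continuous and strictly decreasing in the payment. -/
def S1 (u : Util A) : Prop := ∀ a, Continuous (u a) ∧ StrictAnti (u a)

/-- `min_{a'∈A} u_{a'}(0)`, the value of the worst alternative at zero payment. -/
def minVal [Fintype A] [Nonempty A] (u : Util A) : ℝ :=
  Finset.univ.inf' Finset.univ_nonempty (fun a => u a 0)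

/-- (S2): as the payment tends to `+∞`, the utility of every alternative drops
(strictly) below `min_{a'} u_{a'}(0)`; for strictly decreasing utilities this is
equivalent to the utility being below that value at some payment. -/
def S2 [Fintype A] [Nonempty A] (u : Util A) : Prop :=
  ∀ a, ∃ z : ℝ, u a z < minVal u

/-- The willingness to pay `p_a = u_a⁻¹(min_{a'} u_{a'}(0))` (under (S1),(S2) this
`sInf` is the unique payment at which `u a` attains `minVal u`). -/
def wtp [Fintype A] [Nonempty A] (u : Util A) (a : A) : ℝ :=
  sInf {z : ℝ | u a z ≤ minVal u}

/-- A parallel type: (S1), (S2), and for all `a, b` with `v_a ≥ v_b` and all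
`z ∈ [0, p_b]`, `u_a (z + (p_a − p_b)) = u_b z`. -/
def IsParallel [Fintype A] [Nonempty A] (u : Util A) : Prop :=
  S1 u ∧ S2 u ∧ ∀ a b : A, u b 0 ≤ u a 0 → ∀ z : ℝ, 0 ≤ z → z ≤ wtp u b →
    u a (z + (wtp u a - wtp u b)) = u b z

/-- Unrestricted willingness to pay: every nonnegative vector with a zero entry is
the willingness-to-pay vector of some type in the domain. -/
def UnrestrictedWTP [Fintype A] [Nonempty A] (U : Set (Util A)) : Prop :=
  ∀ lam : A → ℝ, (∀ a, 0 ≤ lam a) → (∃ a, lam a = 0) →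
    ∃ u ∈ U, ∀ a, wtp u a = lam a

/-- Dominant-strategy incentive compatibility of a (deterministic) mechanism `(x,t)`
on the domain `𝒰 = ∏ i, U i`. -/
def DSIC [DecidableEq I] (U : I → Set (Util A)) (x : (I → Util A) → A)
    (t : (I → Util A) → I → ℝ) : Prop :=
  ∀ uh : I → Util A, (∀ j, uh j ∈ U j) → ∀ i, ∀ ui ∈ U i,
    ui (x uh) (t uh i) ≤
      ui (x (Function.update uh i ui)) (t (Function.update uh i ui) i)

/-- Individual rationality. -/
def IR [Fintype A] [Nonempty A] [DecidableEq I] (U : I → Set (Util A))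
    (x : (I → Util A) → A) (t : (I → Util A) → I → ℝ) : Prop :=
  ∀ uh : I → Util A, (∀ j, uh j ∈ U j) → ∀ i, ∀ ui ∈ U i,
    minVal ui ≤ ui (x (Function.update uh i ui)) (t (Function.update uh i ui) i)

/-- No subsidy: the mechanism never makes positive transfers to an agent. -/
def NoSubsidy (U : I → Set (Util A)) (t : (I → Util A) → I → ℝ) : Prop :=
  ∀ u : I → Util A, (∀ j, u j ∈ U j) → ∀ i, 0 ≤ t u i

/-- Ontoness of the choice rule on the given domain. -/
def OntoMech (U : I → Set (Util A)) (x : (I → Util A) → A) : Prop :=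
  ∀ a, ∃ u : I → Util A, (∀ j, u j ∈ U j) ∧ x u = a

/-!
Restricted to one parallel type per vector of values, a truthful mechanism cannot distinguish the
agents from quasi-linear ones, so the induced rule on value profiles has positive association of
differences. By Roberts' theorem it maximizes `∑ i, k i * v i a + C a` for some weights `k ≥ 0`, not
all zero: the sets of value differences at which `x` beats `y`, recentred along the diagonal, are
independent of the pair and form a convex open semigroup, which a hyperplane separates from `0`; the
normal vector of the hyperplane gives `k`, the translations give `C`.

By taxation, an agent faces prices that depend only on the reports of the others. Individual
rationality and no subsidy make the least price `0`, and then the choices at parallel types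
determine all prices. If two agents `i` and `j` had positive weights, agent `j` could confront agent
`i` with every price vector of minimum `0`, and weak monotonicity for `j` would say that the
difference of the prices at which `i` is indifferent between two alternatives does not depend on
the utility level: all types of `i`, and likewise of `j`, would be parallel, contrary to (C2). So
exactly one agent has positive weight, and the prices she faces do not depend on the other reports.
-/

/-! ### Open semigroups -/

theorem nsmul_mem_of_ne_zero {M : Type*} [AddMonoid M] {S : AddSubsemigroup M} {a : M}
    (ha : a ∈ S) {n : ℕ} (hn : n ≠ 0) : n • a ∈ S := by
  induction n, Nat.one_le_iff_ne_zero.2 hn using Nat.le_induction with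
  | base => rwa [one_nsmul]
  | succ n h1n ih => exact succ_nsmul a n ▸ S.add_mem (ih (Nat.one_le_iff_ne_zero.1 h1n)) ha

section OpenSemigroup

open Filter Topology Pointwise

variable {V : Type*} [AddCommGroup V] [TopologicalSpace V] [IsTopologicalAddGroup V]

theorem add_mem_of_isOpen_of_mem_closure {S : AddSubsemigroup V} (hS : IsOpen (S : Set V))
    {a b : V} (ha : a ∈ S) (hb : b ∈ closure (S : Set V)) : a + b ∈ S := by
  have hab : a + b ∈ (S + S : Set V) := hS.add_closure (S : Set V) ▸ Set.add_mem_add ha hb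
  obtain ⟨c, hc, d, hd, hcd⟩ := hab
  exact hcd ▸ S.add_mem hc hd

variable [Module ℝ V] [ContinuousSMul ℝ V] {S : AddSubsemigroup V}

/- If `c • v ∉ S`, then `-(c • v)` is a limit of elements of `S`; a multiple `n • -(c • v)` of it
cancels a multiple `m • w` of a point `w ∈ S` near `v`, where `m / n` approximates `c`. -/
theorem smul_mem_of_isOpen_of_neg_mem_closure (hS : IsOpen (S : Set V)) (h0 : 0 ∉ S)
    (hneg : ∀ v ∉ S, -v ∈ closure (S : Set V)) {c : ℝ} (hc : 0 < c) {v : V} (hv : v ∈ S) :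
    c • v ∈ S := by
  by_contra hcv
  have hlim : Tendsto (fun n : ℕ => (c / (⌈c * n⌉₊ / n)) • v) atTop (𝓝 v) := by
    have hceil := (tendsto_nat_ceil_mul_div_atTop hc.le).comp tendsto_natCast_atTop_atTop
    simpa [hc.ne'] using (tendsto_const_nhds (x := c) |>.div hceil hc.ne').smul_const v
  obtain ⟨n, hn, hnS⟩ :=
    ((eventually_ne_atTop 0).and (hlim.eventually (hS.mem_nhds hv))).exists
  set m := ⌈c * n⌉₊
  have hm : m ≠ 0 := (Nat.ceil_pos.2 (by positivity)).ne'
  have hcancel : m • (c / (m / n)) • v + n • -(c • v) = 0 := by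
    rw [← Nat.cast_smul_eq_nsmul ℝ m, ← Nat.cast_smul_eq_nsmul ℝ n, smul_neg, smul_smul, smul_smul,
      ← sub_eq_add_neg, ← sub_smul]
    field_simp
    simp
  have hclosure : n • -(c • v) ∈ closure (S : Set V) :=
    nsmul_mem_of_ne_zero (S := S.topologicalClosure) (hneg _ hcv) hn
  exact h0 (hcancel ▸ add_mem_of_isOpen_of_mem_closure hS (nsmul_mem_of_ne_zero hnS hm) hclosure)

theorem exists_continuousLinearMap_pos_of_neg_mem_closure (hS : IsOpen (S : Set V)) (h0 : 0 ∉ S)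
    (hneg : ∀ v ∉ S, -v ∈ closure (S : Set V)) : ∃ φ : V →L[ℝ] ℝ, ∀ v ∈ S, 0 < φ v := by
  have hconv : Convex ℝ (S : Set V) := convex_iff_forall_pos.2 fun v hv w hw a b ha hb _ =>
    S.add_mem (smul_mem_of_isOpen_of_neg_mem_closure hS h0 hneg ha hv)
      (smul_mem_of_isOpen_of_neg_mem_closure hS h0 hneg hb hw)
  obtain ⟨φ, hφ⟩ := geometric_hahn_banach_open_point hconv hS h0
  exact ⟨-φ, fun v hv => by simpa using hφ v hv⟩

end OpenSemigroup

theorem map_nonneg_of_pos_on_upperSet {V : Type*} [AddCommGroup V] [PartialOrder V]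
    [IsOrderedAddMonoid V] [Module ℝ V] [PosSMulMono ℝ V] {S : Set V} (hS : IsUpperSet S)
    (hne : S.Nonempty) {φ : V →ₗ[ℝ] ℝ} (hφ : ∀ v ∈ S, 0 < φ v) {e : V} (he : 0 ≤ e) :
    0 ≤ φ e := by
  obtain ⟨v, hv⟩ := hne
  by_contra! hlt
  have hmem : v + (φ v / -φ e) • e ∈ S :=
    hS (le_add_of_nonneg_right (smul_nonneg (div_nonneg (hφ v hv).le (neg_pos.2 hlt).le) he)) hv
  have hpos := hφ _ hmem
  rw [map_add, map_smul, smul_eq_mul, div_neg, neg_mul, div_mul_cancel₀ _ hlt.ne,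
    add_neg_cancel] at hpos
  exact hpos.false

section Diagonal

variable {S : Set (I → ℝ)} {α : I → ℝ}

theorem mem_closure_of_forall_add_const_mem (h : ∀ ε > 0, α + Function.const I ε ∈ S) :
    α ∈ closure S := by
  have hcont : Continuous fun ε : ℝ => α + Function.const I ε :=
    continuous_pi fun i => continuous_const.add continuous_id
  exact mem_closure_of_tendsto ((hcont.tendsto' 0 α (add_zero α)).mono_left nhdsWithin_le_nhds)
    (eventually_nhdsWithin_of_forall (s := Set.Ioi (0 : ℝ)) h)

theorem add_const_mem_of_mem_closure [Finite I] (hS : IsUpperSet S) (hα : α ∈ closure S) {ε : ℝ}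
    (hε : 0 < ε) : α + Function.const I ε ∈ S :=
  interior_subset (hS.mem_interior_of_forall_lt hα fun i => by simp [hε])

theorem exists_sub_const_mem_of_isOpen (hS : IsOpen S) (hα : α ∈ S) :
    ∃ ε > 0, α - Function.const I ε ∈ S := by
  have hcont : Continuous fun ε : ℝ => α - Function.const I ε :=
    continuous_pi fun i => continuous_const.sub continuous_id
  have hmem := (hcont.tendsto' 0 α (sub_zero α)).eventually (hS.mem_nhds hα)
  exact (eventually_mem_nhdsWithin.and (hmem.filter_mono (nhdsWithin_le_nhds (s := .Ioi 0)))).exists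

end Diagonal

/-! ### Roberts' theorem -/

/-- Positive association of differences for a social choice rule on quasi-linear value profiles:
if the advantage of the chosen alternative over each other one rises for every agent, it remains
chosen. -/
def PositiveAssociation (f : (I → A → ℝ) → A) : Prop :=
  ∀ v w, (∀ i, ∀ b ≠ f v, w i b - v i b < w i (f v) - v i (f v)) → f w = f v

/-- The vectors of value differences between `x` and `y` that strictly exceed those of some profile
at which `x` is chosen. -/
def diffSet (f : (I → A → ℝ) → A) (x y : A) : Set (I → ℝ) :=
  {β | ∃ v, f v = x ∧ ∀ i, v i x - v i y < β i}

/-- The infimum of the common advantages of `x` over `y` that make all agents together prevent the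
choice of `y`. -/
def threshold (f : (I → A → ℝ) → A) (x y : A) : ℝ :=
  sInf {r | Function.const I r ∈ diffSet f x y}

/-- The set `diffSet f x y` translated along the diagonal so that its threshold is at the origin. -/
def centredDiffSet (f : (I → A → ℝ) → A) (x y : A) : Set (I → ℝ) :=
  {α | α + Function.const I (threshold f x y) ∈ diffSet f x y}

/-- The rule `f` selects a maximizer of the `k`-weighted sum of values plus the handicap `C`. -/
def IsAffineMaximizer [Fintype I] (k : I → ℝ) (C : A → ℝ) (f : (I → A → ℝ) → A) : Prop :=
  ∀ v a, ∑ i, k i * v i a + C a ≤ ∑ i, k i * v i (f v) + C (f v)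

section Roberts

variable {f : (I → A → ℝ) → A} {x y z : A} {v w : I → A → ℝ} {α β : I → ℝ}

theorem isUpperSet_diffSet (f : (I → A → ℝ) → A) (x y : A) : IsUpperSet (diffSet f x y) :=
  fun _ _ hαβ ⟨v, hv, hlt⟩ => ⟨v, hv, fun i => (hlt i).trans_le (hαβ i)⟩

theorem isOpen_diffSet [Finite I] (f : (I → A → ℝ) → A) (x y : A) : IsOpen (diffSet f x y) := by
  simp only [diffSet, Set.ofPred_exists, Set.ofPred_and, Set.ofPred_forall]
  exact isOpen_iUnion fun v => isOpen_const.inter <| isOpen_iInter_of_finite fun i =>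
    isOpen_lt continuous_const (continuous_apply i)

theorem diffSet_nonempty (hs : f.Surjective) (x y : A) : (diffSet f x y).Nonempty := by
  obtain ⟨v, hv⟩ := hs x
  exact ⟨fun i => v i x - v i y + 1, v, hv, fun i => lt_add_one _⟩

/- A profile in which `x` leads `y` by an intermediate margin and all other alternatives are low is
reached from both `v` and `w` by raising the advantage of the chosen alternative. -/
theorem PositiveAssociation.ne_of_sub_lt_sub (hf : PositiveAssociation f) (hne : f v ≠ y)
    (hlt : ∀ i, v i (f v) - v i y < w i (f v) - w i y) : f w ≠ y := by
  classical
  rintro rfl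
  choose m hvm hmw using fun i => exists_between (hlt i)
  let low : I → A → ℝ := fun i b =>
    min (m i + v i b - v i (f v)) (w i b - w i (f w)) - 1
  let s : I → A → ℝ := fun i => Function.update (Function.update (low i) (f v) (m i)) (f w) 0
  have hsfv : ∀ i, s i (f v) = m i := fun i => by simp [s, hne]
  have hsfw : ∀ i, s i (f w) = 0 := fun i => by simp [s]
  have hslow : ∀ i b, b ≠ f v → b ≠ f w →
      s i b < m i + v i b - v i (f v) ∧ s i b < w i b - w i (f w) := fun i b hbv hbw => by
    simp only [s, low, Function.update_of_ne hbv, Function.update_of_ne hbw]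
    exact lt_min_iff.1 (sub_one_lt _)
  have hsv : f s = f v := by
    refine hf v s fun i b hb => ?_
    rw [hsfv]
    rcases eq_or_ne b (f w) with rfl | hbw
    · rw [hsfw]
      linarith [hvm i]
    · linarith [(hslow i b hb hbw).1]
  have hsw : f s = f w := by
    refine hf w s fun i b hb => ?_
    rw [hsfw]
    rcases eq_or_ne b (f v) with rfl | hbv
    · rw [hsfv]
      linarith [hmw i]
    · linarith [(hslow i b hbv hb).2]
  exact hne (hsv.symm.trans hsw)

theorem PositiveAssociation.ne_of_mem_diffSet (hf : PositiveAssociation f) (hxy : x ≠ y)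
    (hβ : β ∈ diffSet f x y) (hle : ∀ i, β i ≤ w i x - w i y) : f w ≠ y := by
  obtain ⟨v, rfl, hlt⟩ := hβ
  exact hf.ne_of_sub_lt_sub hxy fun i => (hlt i).trans_le (hle i)

theorem PositiveAssociation.exists_eqOn_mem (hf : PositiveAssociation f) (hs : f.Surjective)
    {s : Set A} (hne : s.Nonempty) (v : I → A → ℝ) :
    ∃ w, (∀ i, Set.EqOn (w i) (v i) s) ∧ f w ∈ s := by
  classical
  obtain ⟨x, hx⟩ := hne
  choose B hB using diffSet_nonempty hs x
  let w : I → A → ℝ := fun i b => if b ∈ s then v i b else v i x - B b i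
  refine ⟨w, fun i b hb => if_pos hb, ?_⟩
  by_contra hw
  have hxw : x ≠ f w := fun h => hw (h ▸ hx)
  exact hf.ne_of_mem_diffSet hxw (hB (f w)) (fun i => by simp [w, hw, hx]) rfl

theorem PositiveAssociation.neg_mem_closure_diffSet (hf : PositiveAssociation f)
    (hs : f.Surjective) (hxy : x ≠ y) (hβ : β ∉ diffSet f x y) : -β ∈ closure (diffSet f y x) := by
  classical
  refine mem_closure_of_forall_add_const_mem fun ε hε => ?_
  obtain ⟨w, hw, hmem⟩ := hf.exists_eqOn_mem hs (Set.insert_nonempty x {y})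
    fun i => Pi.single x (β i - ε / 2)
  have hwx : ∀ i, w i x = β i - ε / 2 := fun i => by simp [hw i (Set.mem_insert x {y})]
  have hwy : ∀ i, w i y = 0 := fun i => by simp [hw i (Set.mem_insert_of_mem x rfl), hxy.symm]
  rcases hmem with hx | hy
  · exact absurd ⟨w, hx, fun i => by rw [hwx, hwy]; linarith⟩ hβ
  · refine ⟨w, hy, fun i => ?_⟩
    rw [hwx, hwy, Pi.add_apply, Pi.neg_apply, Function.const_apply]
    linarith

theorem PositiveAssociation.add_mem_diffSet [Finite I] (hf : PositiveAssociation f)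
    (hs : f.Surjective) (hxz : x ≠ z) (hα : α ∈ diffSet f x y) (hβ : β ∈ diffSet f y z) :
    α + β ∈ diffSet f x z := by
  classical
  rcases eq_or_ne x y with rfl | hxy
  · obtain ⟨v, -, hv⟩ := hα
    exact isUpperSet_diffSet f x z (fun i => by simpa using (hv i).le) hβ
  rcases eq_or_ne y z with rfl | hyz
  · obtain ⟨v, -, hv⟩ := hβ
    exact isUpperSet_diffSet f x y (fun i => by simpa using (hv i).le) hα
  obtain ⟨ε, hε, hα⟩ := exists_sub_const_mem_of_isOpen (isOpen_diffSet f x y) hα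
  obtain ⟨w, hw, hmem⟩ := hf.exists_eqOn_mem hs (Set.insert_nonempty x {y, z})
    fun i => Function.update (Pi.single x (α i - ε)) z (-β i)
  have hwx : ∀ i, w i x = α i - ε := fun i => by simp [hw i (.inl rfl), hxz]
  have hwy : ∀ i, w i y = 0 := fun i => by simp [hw i (.inr (.inl rfl)), hxy.symm, hyz]
  have hwz : ∀ i, w i z = -β i := fun i => by simp [hw i (.inr (.inr rfl))]
  rcases hmem with hx | hy | hz
  · exact ⟨w, hx, fun i => by simp [hwx, hwz, hε]⟩
  · exact absurd hy (hf.ne_of_mem_diffSet hxy hα fun i => by simp [hwx, hwy])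
  · exact absurd hz (hf.ne_of_mem_diffSet hyz hβ fun i => by simp [hwy, hwz])

theorem PositiveAssociation.exists_add_pos [Nonempty I] (hf : PositiveAssociation f)
    (hα : α ∈ diffSet f x y) (hβ : β ∈ diffSet f y x) : ∃ i, 0 < α i + β i := by
  obtain ⟨w, hw, hlt⟩ := hβ
  by_cases hxy : x = y
  · obtain ⟨v, -, hv⟩ := hα
    obtain ⟨i⟩ := ‹Nonempty I›
    have hvi := hv i
    have hwi := hlt i
    simp only [hxy, sub_self] at hvi hwi
    exact ⟨i, add_pos hvi hwi⟩
  · by_contra! hle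
    exact hf.ne_of_mem_diffSet hxy hα (fun i => by linarith [hle i, hlt i]) hw

theorem isOpen_centredDiffSet [Finite I] (f : (I → A → ℝ) → A) (x y : A) :
    IsOpen (centredDiffSet f x y) :=
  (isOpen_diffSet f x y).preimage (continuous_add_const _)

theorem isUpperSet_centredDiffSet (f : (I → A → ℝ) → A) (x y : A) :
    IsUpperSet (centredDiffSet f x y) :=
  fun _ _ hαβ hα => isUpperSet_diffSet f x y (add_le_add_left hαβ _) hα

section Threshold

variable [Finite I] [Nonempty I]

theorem PositiveAssociation.const_mem_diffSet_iff (hf : PositiveAssociation f)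
    (hs : f.Surjective) {r : ℝ} : Function.const I r ∈ diffSet f x y ↔ threshold f x y < r := by
  have hne : {r | Function.const I r ∈ diffSet f x y}.Nonempty := by
    obtain ⟨β, hβ⟩ := diffSet_nonempty hs x y
    obtain ⟨r, hr⟩ := (Set.finite_range β).bddAbove
    exact ⟨r, isUpperSet_diffSet f x y (fun i => hr ⟨i, rfl⟩) hβ⟩
  have hbdd : BddBelow {r | Function.const I r ∈ diffSet f x y} := by
    obtain ⟨β, hβ⟩ := diffSet_nonempty hs y x
    obtain ⟨b, hb⟩ := (Set.finite_range β).bddAbove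
    refine ⟨-b, fun r hr => ?_⟩
    obtain ⟨i, hi⟩ := hf.exists_add_pos hr hβ
    have := hb ⟨i, rfl⟩
    simp only [Function.const_apply] at hi
    linarith
  refine ⟨fun hr => ?_, fun hr => ?_⟩
  · obtain ⟨ε, hε, hmem⟩ := exists_sub_const_mem_of_isOpen (isOpen_diffSet f x y) hr
    exact (csInf_le hbdd hmem).trans_lt (sub_lt_self r hε)
  · obtain ⟨s, hs, hsr⟩ := exists_lt_of_csInf_lt hne hr
    exact isUpperSet_diffSet f x y (fun _ => hsr.le) hs

theorem PositiveAssociation.threshold_add_swap (hf : PositiveAssociation f) (hs : f.Surjective)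
    (x y : A) : threshold f x y + threshold f y x = 0 := by
  refine le_antisymm ?_ ?_
  · rcases eq_or_ne x y with rfl | hxy
    · have hnonpos : threshold f x x ≤ 0 := by
        obtain ⟨v, hv⟩ := hs x
        refine le_of_forall_gt fun ε hε => (hf.const_mem_diffSet_iff hs).1 ⟨v, hv, fun i => ?_⟩
        simpa using hε
      linarith
    · have hclosure := hf.neg_mem_closure_diffSet hs hxy
        (fun h => ((hf.const_mem_diffSet_iff hs).1 h).false)
      have hle : threshold f y x ≤ -threshold f x y := le_of_forall_pos_lt_add fun ε hε =>
        (hf.const_mem_diffSet_iff hs).1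
          (add_const_mem_of_mem_closure (isUpperSet_diffSet f y x) hclosure hε)
      linarith
  · by_contra! hlt
    obtain ⟨r, hxr, hry⟩ := exists_between (show threshold f x y < -threshold f y x by linarith)
    obtain ⟨i, hi⟩ := hf.exists_add_pos ((hf.const_mem_diffSet_iff hs).2 hxr)
      ((hf.const_mem_diffSet_iff hs).2 (lt_neg.1 hry))
    simp at hi

theorem PositiveAssociation.threshold_le_add (hf : PositiveAssociation f) (hs : f.Surjective)
    (x y z : A) : threshold f x z ≤ threshold f x y + threshold f y z := by
  rcases eq_or_ne x z with rfl | hxz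
  · linarith [hf.threshold_add_swap hs x x, hf.threshold_add_swap hs x y]
  · refine le_of_forall_pos_lt_add fun ε hε => (hf.const_mem_diffSet_iff hs).1 ?_
    have hxy : Function.const I (threshold f x y + ε / 2) ∈ diffSet f x y :=
      (hf.const_mem_diffSet_iff hs).2 (by linarith)
    have hyz : Function.const I (threshold f y z + ε / 2) ∈ diffSet f y z :=
      (hf.const_mem_diffSet_iff hs).2 (by linarith)
    convert hf.add_mem_diffSet hs hxz hxy hyz using 1
    funext i
    simp only [Function.const_apply, Pi.add_apply]
    ring

theorem PositiveAssociation.threshold_add (hf : PositiveAssociation f) (hs : f.Surjective)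
    (x y z : A) : threshold f x y + threshold f y z = threshold f x z := by
  linarith [hf.threshold_le_add hs x y z, hf.threshold_le_add hs z y x,
    hf.threshold_add_swap hs x y, hf.threshold_add_swap hs y z, hf.threshold_add_swap hs x z]

theorem PositiveAssociation.const_mem_centredDiffSet_iff (hf : PositiveAssociation f)
    (hs : f.Surjective) {r : ℝ} : Function.const I r ∈ centredDiffSet f x y ↔ 0 < r :=
  (hf.const_mem_diffSet_iff hs (r := r + threshold f x y)).trans (by simp)

theorem PositiveAssociation.add_mem_centredDiffSet (hf : PositiveAssociation f)
    (hs : f.Surjective) (hxz : x ≠ z) (hα : α ∈ centredDiffSet f x y)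
    (hβ : β ∈ centredDiffSet f y z) : α + β ∈ centredDiffSet f x z := by
  have hsum := hf.add_mem_diffSet hs hxz hα hβ
  rwa [add_add_add_comm, Function.const_add, hf.threshold_add hs] at hsum

theorem PositiveAssociation.neg_mem_closure_centredDiffSet (hf : PositiveAssociation f)
    (hs : f.Surjective) (hxy : x ≠ y) (hα : α ∉ centredDiffSet f x y) :
    -α ∈ closure (centredDiffSet f y x) := by
  refine mem_closure_of_forall_add_const_mem fun ε hε => ?_
  have heq : -α + Function.const I ε + Function.const I (threshold f y x) =
      -(α + Function.const I (threshold f x y)) + Function.const I ε := by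
    funext i
    simp only [Pi.add_apply, Pi.neg_apply, Function.const_apply]
    linarith [hf.threshold_add_swap hs x y]
  rw [centredDiffSet, Set.mem_ofPred_eq, heq]
  exact add_const_mem_of_mem_closure (isUpperSet_diffSet f y x)
    (hf.neg_mem_closure_diffSet hs hxy hα) hε

theorem PositiveAssociation.centredDiffSet_subset_right (hf : PositiveAssociation f)
    (hs : f.Surjective) (hxz : x ≠ z) : centredDiffSet f x y ⊆ centredDiffSet f x z := by
  intro α hα
  obtain ⟨ε, hε, hmem⟩ := exists_sub_const_mem_of_isOpen (isOpen_centredDiffSet f x y) hα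
  exact sub_add_cancel α (Function.const I ε) ▸
    hf.add_mem_centredDiffSet hs hxz hmem ((hf.const_mem_centredDiffSet_iff hs (x := y)).2 hε)

theorem PositiveAssociation.centredDiffSet_subset_left (hf : PositiveAssociation f)
    (hs : f.Surjective) (hxz : x ≠ z) : centredDiffSet f y z ⊆ centredDiffSet f x z := by
  intro α hα
  obtain ⟨ε, hε, hmem⟩ := exists_sub_const_mem_of_isOpen (isOpen_centredDiffSet f y z) hα
  exact add_sub_cancel (Function.const I ε) α ▸
    hf.add_mem_centredDiffSet hs hxz ((hf.const_mem_centredDiffSet_iff hs (y := y)).2 hε) hmem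

theorem PositiveAssociation.centredDiffSet_subset (hf : PositiveAssociation f)
    (hs : f.Surjective) (hA : 3 ≤ ENat.card A) {x' y' : A} (hne : x' ≠ y') :
    centredDiffSet f x y ⊆ centredDiffSet f x' y' := by
  obtain ⟨z, hzx, hzx'⟩ := ENat.exists_ne_ne_of_three_le hA x x'
  exact (hf.centredDiffSet_subset_right hs hzx.symm).trans <|
    (hf.centredDiffSet_subset_left hs hzx'.symm).trans (hf.centredDiffSet_subset_right hs hne)

theorem PositiveAssociation.exists_pos_on_centredDiffSet (hf : PositiveAssociation f)
    (hs : f.Surjective) (hA : 3 ≤ ENat.card A) :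
    ∃ φ : (I → ℝ) →L[ℝ] ℝ, ∀ x y, ∀ α ∈ centredDiffSet f x y, 0 < φ α := by
  have : Nontrivial A := (ENat.one_lt_card_iff_nontrivial A).1 (hA.trans_lt' (by norm_num))
  obtain ⟨x, y, hxy⟩ := exists_pair_ne A
  let S : AddSubsemigroup (I → ℝ) :=
    { carrier := centredDiffSet f x y
      add_mem' := fun {α β} hα hβ => by
        obtain ⟨z, hzx, hzy⟩ := ENat.exists_ne_ne_of_three_le hA x y
        exact hf.centredDiffSet_subset hs hA hxy <| hf.add_mem_centredDiffSet hs hzx.symm hα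
          (hf.centredDiffSet_subset hs hA hzy.symm hβ) }
  obtain ⟨φ, hφ⟩ := exists_continuousLinearMap_pos_of_neg_mem_closure (S := S)
    (isOpen_centredDiffSet f x y)
    (fun h0 => ((hf.const_mem_centredDiffSet_iff hs).1 h0).false)
    (fun α hα => closure_mono (hf.centredDiffSet_subset hs hA hxy)
      (hf.neg_mem_closure_centredDiffSet hs hxy hα))
  exact ⟨φ, fun x' y' α hα => hφ α (hf.centredDiffSet_subset hs hA hxy hα)⟩

end Threshold

theorem sub_threshold_mem_closure_centredDiffSet (f : (I → A → ℝ) → A) (v : I → A → ℝ) (y : A) :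
    (fun i => v i (f v) - v i y - threshold f (f v) y) ∈ closure (centredDiffSet f (f v) y) :=
  mem_closure_of_forall_add_const_mem fun ε hε => ⟨v, rfl, fun i => by
    simp only [Pi.add_apply, Function.const_apply]
    linarith⟩

/- The weights are the coordinates of the functional that is positive on all centred difference
sets; its value at a threshold is the difference of two handicaps since thresholds are additive. -/
theorem PositiveAssociation.exists_isAffineMaximizer [Fintype I] (hf : PositiveAssociation f)
    (hs : f.Surjective) (hA : 3 ≤ ENat.card A) : ∃ k C, 0 < k ∧ IsAffineMaximizer k C f := by
  classical
  have : Nontrivial A := (ENat.one_lt_card_iff_nontrivial A).1 (hA.trans_lt' (by norm_num))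
  have : Nonempty I := by
    by_contra hI
    have := not_nonempty_iff.1 hI
    exact not_subsingleton A hs.subsingleton
  obtain ⟨x⟩ : Nonempty A := inferInstance
  obtain ⟨φ, hφ⟩ := hf.exists_pos_on_centredDiffSet hs hA
  set k : I → ℝ := fun i => φ (Pi.single i 1)
  have hsum : ∀ α, φ α = ∑ i, k i * α i := fun α => by
    conv_lhs => rw [pi_eq_sum_univ' α, map_sum]
    simp [k, mul_comm]
  have hone : Function.const I 1 ∈ centredDiffSet f x x :=
    (hf.const_mem_centredDiffSet_iff hs).2 one_pos
  have hk : 0 ≤ k := fun i => map_nonneg_of_pos_on_upperSet (isUpperSet_centredDiffSet f x x)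
    ⟨_, hone⟩ (φ := φ.toLinearMap) (hφ x x) (Pi.single_nonneg.2 zero_le_one)
  have hk0 : k ≠ 0 := fun h => (hφ x x _ hone).ne' (by simp [hsum, h])
  refine ⟨k, fun a => (∑ i, k i) * threshold f x a, hk.lt_of_ne' hk0, fun v a => ?_⟩
  have hle : 0 ≤ φ fun i => v i (f v) - v i a - threshold f (f v) a :=
    closure_minimal (fun α hα => (hφ _ _ α hα).le) (isClosed_le continuous_const φ.continuous)
      (sub_threshold_mem_closure_centredDiffSet f v a)
  rw [hsum] at hle
  simp only [mul_sub, Finset.sum_sub_distrib, ← Finset.sum_mul] at hle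
  linear_combination hle - (∑ i, k i) * hf.threshold_add hs x (f v) a

theorem IsAffineMaximizer.eq_of_forall_ne_lt [Fintype I] {k : I → ℝ} {C : A → ℝ}
    (h : IsAffineMaximizer k C f)
    (hlt : ∀ y ≠ x, ∑ i, k i * v i y + C y < ∑ i, k i * v i x + C x) : f v = x :=
  by_contra fun hne => (hlt _ hne).not_ge (h v x)

end Roberts

/-! ### Willingness to pay -/

section WillingnessToPay

variable [Fintype A] [Nonempty A] {u : Util A} {a b c : A} {z z' y y' : ℝ}

theorem minVal_le (u : Util A) (a : A) : minVal u ≤ u a 0 :=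
  Finset.inf'_le _ (Finset.mem_univ a)

theorem exists_eq_minVal (u : Util A) : ∃ c, u c 0 = minVal u := by
  obtain ⟨c, -, hc⟩ := Finset.exists_mem_eq_inf' Finset.univ_nonempty (fun a => u a 0)
  exact ⟨c, hc.symm⟩

theorem apply_wtp (h1 : S1 u) (h2 : S2 u) (a : A) : u a (wtp u a) = minVal u := by
  obtain ⟨z, hz⟩ := h2 a
  have hz0 : 0 ≤ z := ((h1 a).2.lt_iff_gt.1 (hz.trans_le (minVal_le u a))).le
  obtain ⟨p, -, hp⟩ := intermediate_value_Icc' hz0 (h1 a).1.continuousOn ⟨hz.le, minVal_le u a⟩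
  have hset : {z : ℝ | u a z ≤ minVal u} = Set.Ici p := by
    ext s
    rw [Set.mem_ofPred_eq, Set.mem_Ici, ← hp, (h1 a).2.le_iff_ge]
  rw [wtp, hset, csInf_Ici, hp]

theorem minVal_le_apply_iff (h1 : S1 u) (h2 : S2 u) : minVal u ≤ u a z ↔ z ≤ wtp u a := by
  rw [← apply_wtp h1 h2 a, (h1 a).2.le_iff_ge]

theorem minVal_lt_apply_iff (h1 : S1 u) (h2 : S2 u) : minVal u < u a z ↔ z < wtp u a := by
  rw [← apply_wtp h1 h2 a, (h1 a).2.lt_iff_gt]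

theorem wtp_nonneg (h1 : S1 u) (h2 : S2 u) (a : A) : 0 ≤ wtp u a :=
  (minVal_le_apply_iff h1 h2).1 (minVal_le u a)

theorem wtp_eq_zero (h1 : S1 u) (h2 : S2 u) (hc : u c 0 = minVal u) : wtp u c = 0 :=
  (h1 c).2.injective ((apply_wtp h1 h2 c).trans hc.symm)

theorem IsParallel.wtp_sub_le (hu : IsParallel u) (hz : 0 ≤ z) (hza : z ≤ wtp u a) (hz' : 0 ≤ z')
    (h : u b z' ≤ u a z) : wtp u b - z' ≤ wtp u a - z := by
  obtain ⟨h1, -, hp⟩ := hu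
  by_cases hzb : z' ≤ wtp u b
  · rcases le_total (u b 0) (u a 0) with hab | hab
    · rw [← hp a b hab z' hz' hzb, (h1 a).2.le_iff_ge] at h
      linarith
    · rw [← hp b a hab z hz hza, (h1 b).2.le_iff_ge] at h
      linarith
  · linarith

theorem exists_prices_forall_ne_lt (h1 : S1 u) (h2 : S2 u) (hc : u c 0 = minVal u) (hab : a ≠ b)
    (hac : a ≠ c) (hbc : b ≠ c) (hz : 0 ≤ z) (hz' : 0 ≤ z') (hmin : minVal u ≤ u b z')
    (hlt : u b z' < u a z) :
    ∃ π : A → ℝ, IsLeast (Set.range π) 0 ∧ π a = z ∧ π b = z' ∧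
      ∀ d ≠ a, u d (π d) < u a (π a) := by
  classical
  let π := Function.update (Function.update (Function.update (fun d => wtp u d + 1) c 0) b z') a z
  have hπa : π a = z := by simp [π]
  have hπb : π b = z' := by simp [π, hab.symm]
  have hπc : π c = 0 := by simp [π, hac.symm, hbc.symm]
  have hπ : ∀ d, d ≠ a → d ≠ b → d ≠ c → π d = wtp u d + 1 := fun d hda hdb hdc => by
    simp [π, hda, hdb, hdc]
  have hnonneg : ∀ d, 0 ≤ π d := fun d => by
    simp only [π, Function.update_apply]
    split_ifs <;> linarith [wtp_nonneg h1 h2 d]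
  refine ⟨π, ⟨⟨c, hπc⟩, Set.forall_mem_range.2 hnonneg⟩, hπa, hπb, fun d hda => ?_⟩
  rw [hπa]
  rcases eq_or_ne d b with rfl | hdb
  · rwa [hπb]
  rcases eq_or_ne d c with rfl | hdc
  · rw [hπc, hc]
    exact hmin.trans_lt hlt
  · rw [hπ d hda hdb hdc]
    exact ((h1 d).2 (lt_add_one _)).trans (apply_wtp h1 h2 d ▸ hmin.trans_lt hlt)

/-- A choice of an alternative at every price vector that maximizes the utility of the type `u` at
the vectors with minimum `0` and whose price advantages respond monotonically to prices. -/
structure IsMonotoneChoice (u : Util A) (F : (A → ℝ) → A) : Prop where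
  apply_le : ∀ π, IsLeast (Set.range π) 0 → ∀ b, u b (π b) ≤ u (F π) (π (F π))
  sub_le_sub : ∀ π π' : A → ℝ, π (F π) - π (F π') ≤ π' (F π) - π' (F π')

variable {F : (A → ℝ) → A}

theorem IsMonotoneChoice.sub_le_sub_of_lt (hF : IsMonotoneChoice u F) (h1 : S1 u) (h2 : S2 u)
    (hc : u c 0 = minVal u) (hab : a ≠ b) (hac : a ≠ c) (hbc : b ≠ c)
    (hy : 0 ≤ y) (hz : 0 ≤ z) (hmin : minVal u ≤ u b z) (hlt : u b z < u a y)
    (hy' : 0 ≤ y') (hz' : 0 ≤ z') (hmin' : minVal u ≤ u a y') (hlt' : u a y' < u b z') :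
    y - z ≤ y' - z' := by
  obtain ⟨π, hπ, rfl, rfl, hmax⟩ :=
    exists_prices_forall_ne_lt h1 h2 hc hab hac hbc hy hz hmin hlt
  obtain ⟨π', hπ', rfl, rfl, hmax'⟩ :=
    exists_prices_forall_ne_lt h1 h2 hc hab.symm hbc hac hz' hy' hmin' hlt'
  have ha : F π = a := by_contra fun h => (hmax _ h).not_ge (hF.apply_le π hπ a)
  have hb : F π' = b := by_contra fun h => (hmax' _ h).not_ge (hF.apply_le π' hπ' b)
  simpa only [ha, hb] using hF.sub_le_sub π π'

theorem IsMonotoneChoice.sub_le_sub_of_eq (hF : IsMonotoneChoice u F) (h1 : S1 u) (h2 : S2 u)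
    (hc : u c 0 = minVal u) (hab : a ≠ b) (hac : a ≠ c) (hbc : b ≠ c)
    (hy : 0 < y) (hz : 0 ≤ z) (hmin : minVal u ≤ u b z) (heq : u a y = u b z)
    (hy' : 0 ≤ y') (hz' : 0 < z') (hmin' : minVal u ≤ u a y') (heq' : u a y' = u b z') :
    y - z ≤ y' - z' := by
  by_contra! hgap
  obtain ⟨δ, hδ, hδlt⟩ :=
    exists_between (lt_min (lt_min hy hz') (half_pos (sub_pos.2 hgap)))
  obtain ⟨⟨hδy, hδz'⟩, hδgap⟩ := by simpa only [lt_min_iff] using hδlt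
  have hle := hF.sub_le_sub_of_lt h1 h2 hc hab hac hbc (sub_nonneg.2 hδy.le) hz hmin
    (heq ▸ (h1 a).2 (sub_lt_self y hδ)) hy' (sub_nonneg.2 hδz'.le) hmin'
    (heq' ▸ (h1 b).2 (sub_lt_self z' hδ))
  linarith

theorem IsMonotoneChoice.apply_add_wtp_sub (hF : IsMonotoneChoice u F) (h1 : S1 u) (h2 : S2 u)
    (hab : u b 0 ≤ u a 0) (hz : z ∈ Set.Ioo 0 (wtp u b)) :
    u a (z + (wtp u a - wtp u b)) = u b z := by
  obtain ⟨c, hc⟩ := exists_eq_minVal u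
  have hb : minVal u < u b z := (minVal_lt_apply_iff h1 h2).2 hz.2
  have hb0 : u b z < u b 0 := (h1 b).2 hz.1
  have hbc : b ≠ c := by
    rintro rfl
    linarith
  have hac : a ≠ c := by
    rintro rfl
    linarith
  rcases eq_or_ne a b with rfl | hne
  · simp
  obtain ⟨y, ⟨hy0, hyp⟩, hy⟩ : ∃ y ∈ Set.Ioo 0 (wtp u a), u a y = u b z :=
    intermediate_value_Ioo' (wtp_nonneg h1 h2 a) (h1 a).1.continuousOn
      ⟨apply_wtp h1 h2 a ▸ hb, hb0.trans_le hab⟩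
  have hwtp : u a (wtp u a) = u b (wtp u b) := by rw [apply_wtp h1 h2, apply_wtp h1 h2]
  have hle := hF.sub_le_sub_of_eq h1 h2 hc hne hac hbc hy0 hz.1.le hb.le hy
    (hy0.trans hyp).le (hz.1.trans hz.2) (apply_wtp h1 h2 a).ge hwtp
  have hge := hF.sub_le_sub_of_eq h1 h2 hc hne hac hbc (hy0.trans hyp) (hz.1.trans hz.2).le
    (apply_wtp h1 h2 b).ge hwtp hy0.le hz.1 (hy ▸ hb.le) hy
  rw [← hy]
  congr 1
  linarith

theorem IsMonotoneChoice.isParallel (hF : IsMonotoneChoice u F) (h1 : S1 u) (h2 : S2 u) :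
    IsParallel u := by
  refine ⟨h1, h2, fun a b hab z hz hzb => ?_⟩
  rcases (wtp_nonneg h1 h2 b).eq_or_lt with hb | hb
  · rw [hzb.antisymm (hb ▸ hz), add_sub_cancel, apply_wtp h1 h2, apply_wtp h1 h2]
  · have heq : Set.EqOn (fun z => u a (z + (wtp u a - wtp u b))) (u b) (Set.Ioo 0 (wtp u b)) :=
      fun z hz => hF.apply_add_wtp_sub h1 h2 hab hz
    have hcont : Continuous fun z => u a (z + (wtp u a - wtp u b)) :=
      (h1 a).1.comp (continuous_add_const _)
    exact heq.closure hcont (h1 b).1 (closure_Ioo hb.ne ▸ ⟨hz, hzb⟩)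

end WillingnessToPay

/-! ### Truthful mechanisms for a single agent -/

/-- The choice rule `f` and payment rule `p`, as functions of the report of one agent with types in
`D`, are incentive compatible, individually rational, and never pay a subsidy. -/
structure IsTruthful [Fintype A] [Nonempty A] (D : Set (Util A)) (f : Util A → A)
    (p : Util A → ℝ) : Prop where
  s1 : ∀ u ∈ D, S1 u
  s2 : ∀ u ∈ D, S2 u
  apply_le : ∀ u ∈ D, ∀ w ∈ D, u (f w) (p w) ≤ u (f u) (p u)
  minVal_le : ∀ u ∈ D, minVal u ≤ u (f u) (p u)
  nonneg : ∀ u ∈ D, 0 ≤ p u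

/-- Parallel types `par v` in `D`, one for every vector of values `v`, whose willingness to pay is
`v` up to an additive constant, so that they act as quasi-linear agents with values `v`. -/
structure IsParallelSelection [Fintype A] [Nonempty A] (D : Set (Util A))
    (par : (A → ℝ) → Util A) : Prop where
  mem : ∀ v, par v ∈ D
  isParallel : ∀ v, IsParallel (par v)
  wtp_sub : ∀ v a b, wtp (par v) a - wtp (par v) b = v a - v b

/-- Every type in `D` is assigned a favourite alternative at the prices `z` and pays its price. -/
def FacesPrices (D : Set (Util A)) (f : Util A → A) (p : Util A → ℝ) (z : A → ℝ) : Prop :=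
  ∀ u ∈ D, (∀ a, u a (z a) ≤ u (f u) (z (f u))) ∧ p u = z (f u)

section SingleAgent

variable [Fintype A] [Nonempty A] {D : Set (Util A)} {f : Util A → A} {p : Util A → ℝ}
  {par : (A → ℝ) → Util A} {u w : Util A} {π z v v' : A → ℝ}

theorem exists_isParallelSelection {D' : Set (Util A)} (hsub : D' ⊆ D)
    (hpar : ∀ u ∈ D', IsParallel u) (hwtp : UnrestrictedWTP D') :
    ∃ par, IsParallelSelection D par := by
  have hex : ∀ v : A → ℝ, ∃ u ∈ D', ∀ a b, wtp u a - wtp u b = v a - v b := fun v => by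
    obtain ⟨m, hm⟩ := Finite.exists_min v
    obtain ⟨u, hu, hwtp⟩ := hwtp (fun a => v a - v m) (fun a => sub_nonneg.2 (hm a)) ⟨m, sub_self _⟩
    exact ⟨u, hu, fun a b => by rw [hwtp, hwtp, sub_sub_sub_cancel_right]⟩
  choose par hmem hsubwtp using hex
  exact ⟨par, fun v => hsub (hmem v), fun v => hpar _ (hmem v), hsubwtp⟩

theorem IsTruthful.payment_le_wtp (h : IsTruthful D f p) (hu : u ∈ D) : p u ≤ wtp u (f u) :=
  (minVal_le_apply_iff (h.s1 u hu) (h.s2 u hu)).1 (h.minVal_le u hu)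

theorem IsTruthful.payment_eq (h : IsTruthful D f p) (hu : u ∈ D) (hw : w ∈ D)
    (hf : f u = f w) : p u = p w := by
  have huw := h.apply_le u hu w hw
  have hwu := h.apply_le w hw u hu
  rw [hf, (h.s1 u hu _).2.le_iff_ge] at huw
  rw [hf, (h.s1 w hw _).2.le_iff_ge] at hwu
  exact huw.antisymm hwu

theorem IsTruthful.exists_facesPrices (h : IsTruthful D f p) (hf : Set.SurjOn f D Set.univ) :
    ∃ z, FacesPrices D f p z := by
  choose w hw hfw using fun a => hf (Set.mem_univ a)
  have hp : ∀ u ∈ D, p u = p (w (f u)) := fun u hu => h.payment_eq hu (hw _) (hfw _).symm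
  refine ⟨fun a => p (w a), fun u hu => ⟨fun a => ?_, hp u hu⟩⟩
  simpa only [hfw, ← hp u hu] using h.apply_le u hu (w a) (hw a)

section ParallelSelection

variable (h : IsTruthful D f p) (hpar : IsParallelSelection D par)

include h hpar

theorem IsTruthful.sub_payment_le (hw : w ∈ D) (v : A → ℝ) :
    v (f w) - p w ≤ v (f (par v)) - p (par v) := by
  have hle := (hpar.isParallel v).wtp_sub_le (h.nonneg _ (hpar.mem v))
    (h.payment_le_wtp (hpar.mem v)) (h.nonneg w hw) (h.apply_le _ (hpar.mem v) w hw)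
  linarith [hpar.wtp_sub v (f w) (f (par v))]

theorem IsTruthful.add_choice_par_le (v v' : A → ℝ) :
    v (f (par v')) + v' (f (par v)) ≤ v (f (par v)) + v' (f (par v')) := by
  linarith [h.sub_payment_le hpar (hpar.mem v') v, h.sub_payment_le hpar (hpar.mem v) v']

theorem IsTruthful.choice_par_eq
    (hlt : ∀ b ≠ f (par v), v' b - v b < v' (f (par v)) - v (f (par v))) :
    f (par v') = f (par v) := by
  by_contra hne
  linarith [hlt _ hne, h.add_choice_par_le hpar v v']

theorem IsTruthful.exists_choice_par_eq (hw : w ∈ D) : ∃ v, f (par v) = f w := by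
  classical
  refine ⟨Pi.single (f w) (p w + 1), ?_⟩
  by_contra hne
  have hle := h.sub_payment_le hpar hw (Pi.single (f w) (p w + 1))
  rw [Pi.single_eq_same, Pi.single_eq_of_ne hne] at hle
  linarith [h.nonneg _ (hpar.mem (Pi.single (f w) (p w + 1)))]

theorem IsTruthful.payment_par_zero : p (par 0) = 0 := by
  refine le_antisymm ?_ (h.nonneg _ (hpar.mem 0))
  obtain ⟨c, hc⟩ := exists_eq_minVal (par 0)
  have hc0 := wtp_eq_zero (h.s1 _ (hpar.mem 0)) (h.s2 _ (hpar.mem 0)) hc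
  have hwtp : wtp (par 0) (f (par 0)) = 0 := by simpa [hc0] using hpar.wtp_sub 0 (f (par 0)) c
  exact hwtp ▸ h.payment_le_wtp (hpar.mem 0)

theorem IsTruthful.isLeast_range_prices (hf : Set.SurjOn f D Set.univ)
    (hz : FacesPrices D f p z) : IsLeast (Set.range z) 0 := by
  refine ⟨⟨f (par 0), ?_⟩, Set.forall_mem_range.2 fun a => ?_⟩
  · rw [← (hz _ (hpar.mem 0)).2, h.payment_par_zero hpar]
  · obtain ⟨w, hw, rfl⟩ := hf (Set.mem_univ a)
    exact (hz w hw).2 ▸ h.nonneg w hw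

theorem IsTruthful.facesPrices_of_forall_par (hπ : IsLeast (Set.range π) 0)
    (hchoice : ∀ v a, (∀ b ≠ a, v b - π b < v a - π a) → f (par v) = a) :
    FacesPrices D f p π := by
  classical
  have hfav : ∀ a, ∀ ε > 0, f (par (π + Pi.single a ε)) = a := fun a ε hε =>
    hchoice _ a fun b hb => by simp [hb, hε]
  have hf : Set.SurjOn f D Set.univ := fun a _ => ⟨_, hpar.mem _, hfav a 1 one_pos⟩
  obtain ⟨z, hz⟩ := h.exists_facesPrices hf
  have hle : ∀ a b, π b - z b ≤ π a - z a := fun a b => by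
    rcases eq_or_ne b a with rfl | hba
    · rfl
    refine le_of_forall_pos_le_add fun ε hε => ?_
    have hsub := h.sub_payment_le hpar (hpar.mem (π + Pi.single b 1)) (π + Pi.single a ε)
    rw [(hz _ (hpar.mem _)).2, (hz _ (hpar.mem _)).2, hfav b 1 one_pos, hfav a ε hε] at hsub
    simp only [Pi.add_apply, Pi.single_eq_same, Pi.single_eq_of_ne hba] at hsub
    linarith
  have hz0 := h.isLeast_range_prices hpar hf hz
  suffices hzπ : z = π from hzπ ▸ hz
  obtain ⟨⟨c, hc⟩, hπ0⟩ := hπ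
  obtain ⟨⟨m, hm⟩, hz0⟩ := hz0
  funext a
  linarith [hle a m, hle c a, hπ0 ⟨m, rfl⟩, hz0 ⟨c, rfl⟩]

end ParallelSelection

end SingleAgent

/-! ### Mechanisms for several agents -/

/-- At every profile of types in `U`, the mechanism `(x, t)` is a truthful single-agent mechanism
as a function of the report of each agent. -/
def IsSlicewiseTruthful [Fintype A] [Nonempty A] [DecidableEq I] (U : I → Set (Util A))
    (x : (I → Util A) → A) (t : (I → Util A) → I → ℝ) : Prop :=
  ∀ u, (∀ j, u j ∈ U j) → ∀ i,
    IsTruthful (U i) (x ∘ Function.update u i) (fun w => t (Function.update u i w) i)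

section Mechanism

variable [DecidableEq I] {U : I → Set (Util A)} {x : (I → Util A) → A}
  {t : (I → Util A) → I → ℝ} {u u' : I → Util A} {i j : I}

theorem update_mem_domain (hu : ∀ j, u j ∈ U j) {w : Util A} (hw : w ∈ U i) (j : I) :
    Function.update u i w j ∈ U j := by
  rcases eq_or_ne j i with rfl | h
  · simpa using hw
  · simpa [h] using hu j

theorem piecewise_mem_domain (hu : ∀ j, u j ∈ U j) (hu' : ∀ j, u' j ∈ U j) (s : Finset I) (j : I) :
    s.piecewise u u' j ∈ U j :=
  s.piecewise_cases u u' (· ∈ U j) (hu j) (hu' j)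

variable [Fintype A] [Nonempty A]

theorem isSlicewiseTruthful (hS : ∀ i, ∀ u ∈ U i, S1 u ∧ S2 u) (hDSIC : DSIC U x t)
    (hIR : IR U x t) (hNS : NoSubsidy U t) : IsSlicewiseTruthful U x t := fun u hu i =>
  { s1 := fun w hw => (hS i w hw).1
    s2 := fun w hw => (hS i w hw).2
    apply_le := fun w hw w' hw' => by
      simpa using hDSIC (Function.update u i w') (update_mem_domain hu hw') i w hw
    minVal_le := hIR u hu i
    nonneg := fun _ hw => hNS _ (update_mem_domain hu hw) i }

variable {par : I → (A → ℝ) → Util A} (h : IsSlicewiseTruthful U x t)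
  (hpar : ∀ i, IsParallelSelection (U i) (par i))

include h hpar

theorem IsSlicewiseTruthful.exists_piecewise_eq (hu : ∀ j, u j ∈ U j) (s : Finset I) :
    ∃ v, x (s.piecewise (Pi.map par v) u) = x u := by
  induction s using Finset.induction_on with
  | empty => exact ⟨0, by simp⟩
  | insert i s _ ih =>
    obtain ⟨v, hv⟩ := ih
    set u' := s.piecewise (Pi.map par v) u
    have hu' : ∀ j, u' j ∈ U j :=
      piecewise_mem_domain (fun j => (hpar j).mem (v j)) hu s
    obtain ⟨r, hr⟩ := (h u' hu' i).exists_choice_par_eq (hpar i) (hu' i)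
    refine ⟨Function.update v i r, ?_⟩
    rw [Finset.piecewise_insert, Pi.map_update, Function.update_self,
      Finset.update_piecewise, Function.update_idem, ← Finset.update_piecewise, ← hv]
    simpa using hr

theorem IsSlicewiseTruthful.surjective [Finite I] (hOnto : OntoMech U x) :
    (x ∘ Pi.map par).Surjective := by
  intro a
  obtain ⟨_⟩ := nonempty_fintype I
  obtain ⟨u, hu, rfl⟩ := hOnto a
  obtain ⟨v, hv⟩ := h.exists_piecewise_eq hpar hu Finset.univ
  exact ⟨v, by simpa using hv⟩

theorem IsSlicewiseTruthful.positiveAssociation [Finite I] :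
    PositiveAssociation (x ∘ Pi.map par) := by
  intro v w hlt
  obtain ⟨_⟩ := nonempty_fintype I
  have hpiecewise : ∀ s : Finset I,
      x (s.piecewise (Pi.map par w) (Pi.map par v)) = x (Pi.map par v) := by
    intro s
    induction s using Finset.induction_on with
    | empty => simp
    | insert i s his ih =>
      set u := s.piecewise (Pi.map par w) (Pi.map par v)
      have hu : ∀ j, u j ∈ U j :=
        piecewise_mem_domain (fun j => (hpar j).mem (w j)) (fun j => (hpar j).mem (v j)) s
      have hui : Function.update u i (par i (v i)) = u := by
        simp [u, his]
      rw [Finset.piecewise_insert, ← ih]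
      have hchoice := (h u hu i).choice_par_eq (hpar i) (v := v i) (v' := w i)
      simp only [Function.comp_apply, hui, ih] at hchoice
      exact (hchoice (hlt i)).trans ih.symm
  simpa using hpiecewise Finset.univ

variable [Fintype I] {k : I → ℝ} {C : A → ℝ} (hmax : IsAffineMaximizer k C (x ∘ Pi.map par))

include hmax

theorem IsSlicewiseTruthful.facesPrices_of_weight_eq_zero (hi : 0 < k i)
    (hk : ∀ j ≠ i, k j = 0) {m : A} (hm : ∀ a, C a ≤ C m) (hu : ∀ j, u j ∈ U j) :
    FacesPrices (U i) (x ∘ Function.update u i) (fun w => t (Function.update u i w) i)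
      fun a => (C m - C a) / k i := by
  refine (h u hu i).facesPrices_of_forall_par (hpar i) ⟨⟨m, by simp⟩, Set.forall_mem_range.2
    fun a => div_nonneg (sub_nonneg.2 (hm a)) hi.le⟩ fun v a hlt => ?_
  obtain ⟨V, hV⟩ := h.exists_piecewise_eq hpar (update_mem_domain hu ((hpar i).mem v))
    (Finset.univ.erase i)
  rw [Finset.piecewise_erase_univ, Function.update_self, ← Pi.map_update] at hV
  rw [Function.comp_apply, ← hV]
  refine hmax.eq_of_forall_ne_lt fun b hb => ?_
  have hsum : ∀ y, ∑ l, k l * Function.update V i v l y = k i * v y := fun y => by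
    rw [Finset.sum_eq_single_of_mem i (Finset.mem_univ i) fun l _ hl => by rw [hk l hl, zero_mul],
      Function.update_self]
  rw [hsum, hsum]
  have hltk := mul_lt_mul_of_pos_left (hlt b hb) hi
  rw [mul_sub, mul_sub, mul_div_cancel₀ _ hi.ne', mul_div_cancel₀ _ hi.ne'] at hltk
  linarith

theorem IsSlicewiseTruthful.facesPrices_of_two_weights (hij : i ≠ j) (hi : 0 < k i)
    {π V : A → ℝ} (hπ : IsLeast (Set.range π) 0) (hV : ∀ a, k j * V a + C a = -(k i * π a)) :
    FacesPrices (U i) (x ∘ Function.update (Pi.map par (Pi.single j V)) i)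
      (fun w => t (Function.update (Pi.map par (Pi.single j V)) i w) i) π := by
  have hV' : ∀ l, Pi.map par (Pi.single j V) l ∈ U l := fun l => (hpar l).mem _
  refine (h _ hV' i).facesPrices_of_forall_par (hpar i) hπ fun v a hlt => ?_
  rw [Function.comp_apply, ← Pi.map_update]
  refine hmax.eq_of_forall_ne_lt fun b hb => ?_
  have hsum : ∀ y, ∑ l, k l * Function.update (Pi.single j V : I → A → ℝ) i v l y =
      k i * v y + k j * V y := fun y => by
    rw [Finset.sum_eq_add i j hij (fun l _ hl => by simp [hl]) (by simp) (by simp)]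
    simp [hij.symm]
  rw [hsum, hsum, add_assoc, add_assoc, hV, hV]
  linarith [mul_lt_mul_of_pos_left (hlt b hb) hi]

/- At the values `V π` of agent `j` the handicaps faced by agent `i` amount to the prices `-π`, and
weak monotonicity for agent `j` is monotonicity of the choice of agent `i` in `π`. -/
theorem IsSlicewiseTruthful.isParallel_of_two_weights (hij : i ≠ j) (hi : 0 < k i) (hj : 0 < k j)
    {w : Util A} (hw : w ∈ U i) : IsParallel w := by
  let V : (A → ℝ) → A → ℝ := fun π a => (-(k i * π a) - C a) / k j
  have hV : ∀ π a, k j * V π a + C a = -(k i * π a) := fun π a => by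
    rw [mul_div_cancel₀ _ hj.ne', sub_add_cancel]
  let F : (A → ℝ) → A := fun π => x (Function.update (Pi.map par (Pi.single j (V π))) i w)
  have hbase : ∀ l, Pi.map par 0 l ∈ U l := fun l => (hpar l).mem _
  have hw' := h _ hbase i
  refine IsMonotoneChoice.isParallel (F := F) ⟨fun π hπ => ?_, fun π π' => ?_⟩
    (hw'.s1 w hw) (hw'.s2 w hw)
  · exact (h.facesPrices_of_two_weights hpar hmax hij hi hπ (hV π) w hw).1
  · have hF : ∀ π, F π = x (Function.update (Function.update (Pi.map par 0) i w) j
        (par j (V π))) := fun π => by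
      rw [← Function.update_comm hij.symm, ← Pi.map_update]
      rfl
    have hmono := (h _ (update_mem_domain hbase hw) j).add_choice_par_le (hpar j) (V π) (V π')
    simp only [Function.comp_apply, ← hF] at hmono
    have hmonok := mul_le_mul_of_nonneg_left hmono hj.le
    rw [mul_add, mul_add] at hmonok
    refine le_of_mul_le_mul_left ?_ hi
    linarith [hV π (F π), hV π (F π'), hV π' (F π), hV π' (F π')]

end Mechanism

/-- Main dictatorship theorem. With `|A| ≥ 3`, if each `U i` contains
an unrestricted parallel domain (C1) and at least `n−1` agents have some non-parallel
type (C2), then every DSIC, deterministic, onto, IR, no-subsidy mechanism is a fixed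
price dictatorship. -/
theorem dictatorship
    [Fintype A] [Nonempty A] [Fintype I] [DecidableEq I]
    (hA : 3 ≤ Fintype.card A)
    (U : I → Set (Util A))
    (hS : ∀ i, ∀ u ∈ U i, S1 u ∧ S2 u)
    -- (C1): each `U i` contains an unrestricted parallel domain
    (hC1 : ∀ i, ∃ D : Set (Util A), D ⊆ U i ∧ (∀ u ∈ D, IsParallel u) ∧ UnrestrictedWTP D)
    -- (C2): at most one agent has all her types parallel
    (hC2 : ∀ i j : I, i ≠ j →
      (∃ u ∈ U i, ¬ IsParallel u) ∨ (∃ u ∈ U j, ¬ IsParallel u))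
    (x : (I → Util A) → A) (t : (I → Util A) → I → ℝ)
    (hDSIC : DSIC U x t) (hOnto : OntoMech U x)
    (hIR : IR U x t) (hNS : NoSubsidy U t) :
    ∃ (istar : I) (z : A → ℝ), ∀ u : I → Util A, (∀ j, u j ∈ U j) →
      (∀ a : A, u istar a (z a) ≤ u istar (x u) (z (x u))) ∧ t u istar = z (x u) := by
  choose par hpar using fun i =>
    (hC1 i).elim fun _ hD => exists_isParallelSelection hD.1 hD.2.1 hD.2.2
  have h := isSlicewiseTruthful hS hDSIC hIR hNS
  obtain ⟨k, C, hk, hmax⟩ := (h.positiveAssociation hpar).exists_isAffineMaximizer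
    (h.surjective hpar hOnto) (by simpa [ENat.card_eq_coe_fintype_card] using mod_cast hA)
  obtain ⟨hk0, i, hi⟩ := Pi.lt_def.1 hk
  have hki : ∀ j ≠ i, k j = 0 := by
    intro j hji
    by_contra hne
    have hj : 0 < k j := (hk0 j).lt_of_ne' hne
    obtain ⟨w, hw, hnpar⟩ | ⟨w, hw, hnpar⟩ := hC2 i j hji.symm
    · exact hnpar (h.isParallel_of_two_weights hpar hmax hji.symm hi hj hw)
    · exact hnpar (h.isParallel_of_two_weights hpar hmax hji hj hi hw)
  obtain ⟨m, hm⟩ := Finite.exists_max C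
  refine ⟨i, fun a => (C m - C a) / k i, fun u hu => ?_⟩
  simpa using h.facesPrices_of_weight_eq_zero hpar hmax hi hki hm hu (u i) (hu i)

end NQLSC
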